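/- arXiv:1806.01592 — 6 statements merged into one kernel-verified Lean document; each statement's English description precedes it below -/
import Mathlib

section
/- Let A be a complex Banach algebra, let e ∈ A satisfy ‖e‖ ≤ 1, and let φ be a character of A with φ(e) ≠ 0. If A is approximately φ-contractible, then A_e is approximately ψ-contractible where ψ = φ(e)·φ; that is, there exists a net (n_i) in A such that ψ(n_i) = 1 for all i and ‖a·e·n_i − ψ(a)·n_i‖ → 0 along the net for every a ∈ A. -/
open Filter Topology

section General

universe u v w

variable {𝕜 : Type u} [NormedField 𝕜]

section NormedSpace

variable {E : Type v} [SeminormedAddCommGroup E] [NormedSpace 𝕜 E]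

theorem tendsto_norm_map_const_smul_sub_smul {ι : Type w} {l : Filter ι} {x : ι → E}
    (T : E →ₗ[𝕜] E) (μ c : 𝕜) (h : Tendsto (fun i => ‖T (x i) - μ • x i‖) l (𝓝 0)) :
    Tendsto (fun i => ‖T (c • x i) - μ • c • x i‖) l (𝓝 0) := by
  have factor_out (i : ι) : ‖T (c • x i) - μ • c • x i‖ = ‖c‖ * ‖T (x i) - μ • x i‖ := by
    rw [map_smul, smul_comm μ c, ← smul_sub, norm_smul]
  simpa only [factor_out, mul_zero] using h.const_mul ‖c‖

/-- The net `m` along `l` witnesses approximate `φ`-contractibility of the algebra with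
underlying space `E` and product `mul`. The product is an argument so that the algebras `A`
(`mul a b = a * b`) and `A_e` (`mul a b = a * e * b`) live on the same normed space. -/
def IsApproxContractingNet {ι : Type w} (mul : E → E → E) (φ : E → 𝕜) (l : Filter ι)
    (m : ι → E) : Prop :=
  (∀ i, φ (m i) = 1) ∧ ∀ a, Tendsto (fun i => ‖mul a (m i) - φ a • m i‖) l (𝓝 0)

/-- Approximate `φ`-contractibility of `E` under the product `mul`. Nets are encoded as families
along a nontrivial filter, with index types in the universe `w`. -/
def IsApproxContractible (mul : E → E → E) (φ : E → 𝕜) : Prop :=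
  ∃ (ι : Type w) (l : Filter ι), l.NeBot ∧ ∃ m : ι → E, IsApproxContractingNet mul φ l m

end NormedSpace

variable {A : Type v} [NonUnitalSeminormedRing A] [NormedSpace 𝕜 A] [SMulCommClass 𝕜 A A]

theorem IsApproxContractingNet.inv_smul {ι : Type w} {l : Filter ι} {m : ι → A} {e : A}
    {φ : A →ₗ[𝕜] 𝕜} (hφ : ∀ a, φ (a * e) = φ a * φ e) (he : φ e ≠ 0)
    (hm : IsApproxContractingNet (· * ·) φ l m) :
    IsApproxContractingNet (fun a b => a * e * b) (φ e • φ) l (fun i => (φ e)⁻¹ • m i) := by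
  obtain ⟨map_eq_one, tendsto_zero⟩ := hm
  refine ⟨fun i => ?_, fun a => ?_⟩
  · simp [map_eq_one, he]
  · have map_mul_e : φ (a * e) = (φ e • φ) a := (hφ a).trans (mul_comm _ _)
    rw [← map_mul_e]
    exact tendsto_norm_map_const_smul_sub_smul (LinearMap.mulLeft 𝕜 (a * e)) _ _
      (tendsto_zero (a * e))

theorem stmt3_general {e : A} {φ : A →ₗ[𝕜] 𝕜} (hφ : ∀ a b, φ (a * b) = φ a * φ b)
    (he : φ e ≠ 0) (hA : IsApproxContractible.{u, v, w} (· * ·) φ) :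
    IsApproxContractible.{u, v, w} (fun a b => a * e * b) (φ e • φ) :=
  let ⟨ι, l, hl, _, hm⟩ := hA
  ⟨ι, l, hl, _, hm.inv_smul (hφ · e) he⟩

end General

/-- Let `A` be a complex Banach algebra, `e ∈ A` with `‖e‖ ≤ 1`,
and `φ` a character of `A` with `φ e ≠ 0`.  If `A` is approximately
`φ`-contractible (there is a net `(m_i)` with `φ (m_i) = 1` and
`‖a * m_i - φ a • m_i‖ → 0` for all `a`), then `A_e` is approximately
`ψ`-contractible for `ψ = φ(e) • φ`: there is a net `(n_i)` with `ψ (n_i) = 1`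
and `‖a * e * n_i - ψ a • n_i‖ → 0` for all `a`. -/
theorem stmt3 {A : Type*} [NonUnitalNormedRing A] [NormedSpace ℂ A]
    [IsScalarTower ℂ A A] [SMulCommClass ℂ A A] [CompleteSpace A]
    (e : A) (he : ‖e‖ ≤ 1)
    (φ : A →L[ℂ] ℂ) (hφ0 : φ ≠ 0) (hφ : ∀ a b : A, φ (a * b) = φ a * φ b)
    (he0 : φ e ≠ 0)
    (hA : ∃ (ι : Type) (l : Filter ι), l.NeBot ∧ ∃ m : ι → A,
      (∀ i, φ (m i) = 1) ∧
      ∀ a : A, Tendsto (fun i => ‖a * m i - φ a • m i‖) l (𝓝 0)) :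
    ∃ (ι : Type) (l : Filter ι), l.NeBot ∧ ∃ n : ι → A,
      (∀ i, φ e * φ (n i) = 1) ∧
      ∀ a : A, Tendsto (fun i => ‖a * e * n i - (φ e * φ a) • n i‖) l (𝓝 0) :=
  stmt3_general (φ := φ.toLinearMap) hφ he0 hA
end

section
/- Let A be a unital complex Banach algebra and let e ∈ A be invertible with ‖e‖ ≤ 1. Let ψ be a character of A_e (a nonzero continuous linear functional with ψ(a·e·b) = ψ(a)·ψ(b) for all a, b ∈ A) and define φ(a) = ψ(e⁻¹·a). If A_e is approximately ψ-contractible, i.e. there is a net (m_i) in A with ψ(m_i) = 1 for all i and ‖a·e·m_i − ψ(a)·m_i‖ → 0 for every a ∈ A, then A is approximately φ-contractible: there is a net (n_i) in A with φ(n_i) = 1 for all i and ‖a·n_i − φ(a)·n_i‖ → 0 for every a ∈ A. -/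
open Filter Topology

/-- Approximate `φ`-contractibility of a normed space `A` under the product `p`. The product is
a parameter because `A_e` and `A` have the same carrier: `A_e` is the case `p a b = a * e * b`. -/
def ApproxContractible.{w, u, v} {𝕜 : Type u} {A : Type v} [One 𝕜] [SeminormedAddCommGroup A]
    [SMul 𝕜 A] (p : A → A → A) (φ : A → 𝕜) : Prop :=
  ∃ (ι : Type w) (l : Filter ι), l.NeBot ∧ ∃ m : ι → A,
    (∀ i, φ (m i) = 1) ∧ ∀ a : A, Tendsto (fun i => ‖p a (m i) - φ a • m i‖) l (𝓝 0)

theorem ApproxContractible.map_of_surjective.{w} {𝕜 A B : Type*} [Semiring 𝕜]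
    [SeminormedAddCommGroup A] [Module 𝕜 A] [SeminormedAddCommGroup B] [Module 𝕜 B]
    {p : A → A → A} {q : B → B → B} {φ : B → 𝕜} (T : A →L[𝕜] B)
    (hT : Function.Surjective T) (map_mul : ∀ a b, T (p a b) = q (T a) (T b))
    (h : ApproxContractible.{w} p (φ ∘ T)) : ApproxContractible.{w} q φ := by
  obtain ⟨ι, l, hl, m, hm_one, hm_lim⟩ := h
  refine ⟨ι, l, hl, T ∘ m, hm_one, hT.forall.2 fun a => ?_⟩
  have map_defect (i : ι) :
      T (p a (m i) - φ (T a) • m i) = q (T a) (T (m i)) - φ (T a) • T (m i) := by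
    rw [map_sub, map_smul, map_mul]
  have defect_tendsto : Tendsto (fun i => p a (m i) - φ (T a) • m i) l (𝓝 0) :=
    tendsto_zero_iff_norm_tendsto_zero.2 (hm_lim a)
  simpa only [map_defect, map_zero, norm_zero, Function.comp_apply] using
    ((T.continuous.tendsto 0).comp defect_tendsto).norm

/-- Left multiplication by `e` is an isomorphism of `A_e` onto `A`, since
`e * (a * e * b) = (e * a) * (e * b)`, and it carries `ψ` to `ψ (e⁻¹ * ·)`. -/
theorem stmt4_general.{w} {𝕜 A : Type*} [CommSemiring 𝕜] [SeminormedRing A] [Algebra 𝕜 A]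
    (e : Aˣ) {ψ : A → 𝕜} (h : ApproxContractible.{w} (fun a b : A => a * e * b) ψ) :
    ApproxContractible.{w} (fun a b : A => a * b) (fun a => ψ (↑e⁻¹ * a)) := by
  let T : A →L[𝕜] A := ⟨LinearMap.mulLeft 𝕜 (e : A), continuous_const_mul (e : A)⟩
  have functional_comp : (fun a => ψ (↑e⁻¹ * a)) ∘ T = ψ :=
    funext fun a => congrArg ψ (e.inv_mul_cancel_left a)
  refine ApproxContractible.map_of_surjective T e.mulLeft_bijective.surjective (fun a b => ?_)
    (functional_comp.symm ▸ h)
  change e * (a * e * b) = e * a * (e * b)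
  simp only [mul_assoc]

/-- Let `A` be a unital complex Banach algebra and `e ∈ A`
invertible with `‖e‖ ≤ 1` (two-sided inverse `f = e⁻¹`).  Let `ψ` be a character of
`A_e` (nonzero continuous linear, `ψ (a*e*b) = ψ a * ψ b`) and set
`φ a = ψ (e⁻¹ * a)`.  If `A_e` is approximately `ψ`-contractible (a net `(m_i)`
with `ψ (m_i) = 1` and `‖a * e * m_i - ψ a • m_i‖ → 0` for all `a`), then `A` is
approximately `φ`-contractible: a net `(n_i)` with `φ (n_i) = 1` and
`‖a * n_i - φ a • n_i‖ → 0` for all `a`. -/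
theorem stmt4 {A : Type*} [NormedRing A] [NormedAlgebra ℂ A] [CompleteSpace A]
    (e f : A) (he : ‖e‖ ≤ 1) (hef : e * f = 1) (hfe : f * e = 1)
    (ψ : A →L[ℂ] ℂ) (hψ0 : ψ ≠ 0) (hψ : ∀ a b : A, ψ (a * e * b) = ψ a * ψ b)
    (hAe : ∃ (ι : Type) (l : Filter ι), l.NeBot ∧ ∃ m : ι → A,
      (∀ i, ψ (m i) = 1) ∧
      ∀ a : A, Tendsto (fun i => ‖a * e * m i - ψ a • m i‖) l (𝓝 0)) :
    ∃ (ι : Type) (l : Filter ι), l.NeBot ∧ ∃ n : ι → A,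
      (∀ i, ψ (f * n i) = 1) ∧
      ∀ a : A, Tendsto (fun i => ‖a * n i - ψ (f * a) • n i‖) l (𝓝 0) :=
  stmt4_general ⟨e, f, hef, hfe⟩ hAe
end

section
/- Let A be the complex Banach algebra of 3×3 upper triangular complex matrices and φ : A → ℂ the character φ(M) = M₃₃. Then A is not approximately φ-contractible: there is no nontrivial filter on an index type together with a family (m_i) in A such that φ(m_i) = 1 for all i and ‖a·m_i − φ(a)·m_i‖ → 0 along the filter for every a ∈ A. -/
open Filter Topology Matrix

/-- The algebra of 3×3 upper triangular complex matrices. -/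
def UT3 : Subalgebra ℂ (Matrix (Fin 3) (Fin 3) ℂ) where
  carrier := {M | M.BlockTriangular id}
  mul_mem' ha hb := ha.mul hb
  add_mem' ha hb := ha.add hb
  one_mem' := Matrix.blockTriangular_one
  zero_mem' := Matrix.blockTriangular_zero
  algebraMap_mem' c := by
    rw [Matrix.algebraMap_eq_diagonal]
    exact Matrix.blockTriangular_diagonal _

/-- The character `φ M = M₃₃` on `UT3`. -/
def φ33 (M : UT3) : ℂ := (M : Matrix (Fin 3) (Fin 3) ℂ) 2 2

/-- `m` is an approximate `φ`-mean along `l`: a net normalised by `φ` on which left multiplication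
by every `a` is asymptotically the scalar `φ a`. For a character `φ` of a Banach algebra,
approximate `φ`-contractibility is the existence of such a net along some nontrivial filter; `φ` is
a bare function here, so that the definition applies to `φ33` as it stands. -/
def IsApproxMean {R A ι : Type*} [One R] [NonUnitalNonAssocRing A] [SMul R A] [TopologicalSpace A]
    (φ : A → R) (l : Filter ι) (m : ι → A) : Prop :=
  (∀ i, φ (m i) = 1) ∧ ∀ a, Tendsto (fun i => a * m i - φ a • m i) l (𝓝 0)

theorem not_isApproxMean_of_comp_mul_left_eq {R A ι : Type*} [Zero R] [One R] [NeZero (1 : R)]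
    [TopologicalSpace R] [T1Space R] [NonUnitalNonAssocRing A] [SMulWithZero R A]
    [TopologicalSpace A] {φ f : A → R} {a : A} (hf : Tendsto f (𝓝 0) (𝓝 0)) (hφa : φ a = 0)
    (hfa : ∀ x, f (a * x) = φ x) {l : Filter ι} [l.NeBot] {m : ι → A} :
    ¬ IsApproxMean φ l m := by
  rintro ⟨hφm, hm⟩
  have tendsto_mul : Tendsto (fun i => a * m i) l (𝓝 0) := by
    simpa only [hφa, zero_smul, sub_zero] using hm a
  have tendsto_one : Tendsto (fun _ => (1 : R)) l (𝓝 0) := by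
    simpa only [Function.comp_def, hfa, hφm] using hf.comp tendsto_mul
  exact one_ne_zero (tendsto_const_nhds_iff.mp tendsto_one)

section Matrix

variable {n R ι : Type*} [Fintype n] [CommRing R] [Nontrivial R]
  [TopologicalSpace R] [T1Space R] {l : Filter ι} [l.NeBot] {j k : n}

-- The matrix unit `E_{jk}` has zero `(k, k)` entry, yet left multiplication by it moves the
-- `(k, k)` entry of `M` to position `(j, k)`.
theorem not_isApproxMean_diag_entry_of_single_mem [DecidableEq n]
    {S : Subalgebra R (Matrix n n R)} (hjk : j ≠ k) (hS : single j k 1 ∈ S) {m : ι → S} :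
    ¬ IsApproxMean (fun M : S => M.1 k k) l m := by
  have continuous_entry : Continuous fun M : S => M.1 j k :=
    continuous_subtype_val.matrix_elem j k
  refine not_isApproxMean_of_comp_mul_left_eq (a := ⟨single j k 1, hS⟩)
    (continuous_entry.tendsto' 0 0 rfl) ?_ fun M => ?_
  · exact single_apply_of_row_ne hjk k k 1
  · exact (single_mul_apply_same 1 j k k M.1).trans (one_mul _)

theorem stmt5_general [LinearOrder n] (hjk : j < k)
    {m : ι → blockTriangularSubalgebra R R (id : n → n)} :
    ¬ IsApproxMean (fun M : blockTriangularSubalgebra R R (id : n → n) => M.1 k k) l m :=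
  not_isApproxMean_diag_entry_of_single_mem hjk.ne (blockTriangular_single hjk.le 1)

end Matrix

theorem stmt5 :
    ¬ ∃ (ι : Type) (l : Filter ι), l.NeBot ∧ ∃ m : ι → UT3,
      (∀ i, φ33 (m i) = 1) ∧
      ∀ a : UT3, Tendsto (fun i => a * m i - φ33 a • m i) l (𝓝 0) := by
  rintro ⟨ι, l, hl, m, hm⟩
  exact stmt5_general (R := ℂ) (j := 0) (k := (2 : Fin 3)) (by decide) hm
end

section
/- Let A be a complex Banach algebra, φ a character of A, and e ∈ A with ‖e‖ ≤ 1 and φ(e) ≠ 0. Suppose A is φ-biprojective in the algebraic sense: there exists a ℂ-linear map ρ : A → A⊗A with ρ(ab) = a·ρ(b) and ρ(ab) = ρ(a)·b for all a, b ∈ A, and φ(π_A(ρ(a))) = φ(a) for all a ∈ A. Then the map ρ̃ = φ(e)⁻¹·ρ witnesses that A_e is ψ-biprojective for ψ = φ(e)·φ: for all a, b ∈ A, ρ̃(a·e·b) = (a·e)·ρ̃(b) and ρ̃(a·e·b) = ρ̃(a)·(e·b), and ψ(π_e(ρ̃(a))) = ψ(a) for all a ∈ A, where π_e : A⊗A →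 A is the linear map with π_e(x⊗y) = x·e·y. -/
open TensorProduct

section

variable {R A : Type*} [CommSemiring R]

theorem map_mul'_lTensor_mulLeft [NonUnitalNonAssocSemiring A] [Module R A]
    [IsScalarTower R A A] [SMulCommClass R A A]
    {B : Type*} [NonUnitalCommSemiring B] [Module R B]
    (φ : A →ₙₐ[R] B) (e : A) (t : A ⊗[R] A) :
    φ (LinearMap.mul' R A (LinearMap.lTensor A (LinearMap.mulLeft R e) t)) =
      φ e * φ (LinearMap.mul' R A t) := by
  induction t with
  | zero => simp only [map_zero, mul_zero]
  | tmul x y =>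
    calc φ (x * (e * y)) = φ x * (φ e * φ y) := by rw [map_mul, map_mul]
      _ = φ e * (φ x * φ y) := mul_left_comm _ _ _
      _ = φ e * φ (x * y) := by rw [map_mul]
  | add s t hs ht => simp only [map_add, hs, ht, mul_add]

theorem stmt7_general [NonUnitalSemiring A] [Module R A]
    [IsScalarTower R A A] [SMulCommClass R A A]
    (φ : A →ₙₐ[R] R) (e : A) (c : R) (hc : φ e * c = 1) (ρ : A →ₗ[R] A ⊗[R] A)
    (hρl : ∀ a b : A, ρ (a * b) = LinearMap.rTensor A (LinearMap.mulLeft R a) (ρ b))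
    (hρr : ∀ a b : A, ρ (a * b) = LinearMap.lTensor A (LinearMap.mulRight R b) (ρ a))
    (hρπ : ∀ a : A, φ (LinearMap.mul' R A (ρ a)) = φ a) :
    (∀ a b : A, c • ρ (a * e * b) =
      LinearMap.rTensor A (LinearMap.mulLeft R (a * e)) (c • ρ b)) ∧
    (∀ a b : A, c • ρ (a * e * b) =
      LinearMap.lTensor A (LinearMap.mulRight R (e * b)) (c • ρ a)) ∧
    (∀ a : A, φ e * φ (LinearMap.mul' R A
        (LinearMap.lTensor A (LinearMap.mulLeft R e) (c • ρ a)))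
      = φ e * φ a) := by
  refine ⟨fun a b => ?left_linear, fun a b => ?right_linear, fun a => ?preserves_character⟩
  case left_linear => rw [map_smul, hρl]
  case right_linear => rw [map_smul, mul_assoc, hρr]
  case preserves_character =>
    congr 1
    calc φ (LinearMap.mul' R A (LinearMap.lTensor A (LinearMap.mulLeft R e) (c • ρ a)))
        = φ e * φ (LinearMap.mul' R A (c • ρ a)) := map_mul'_lTensor_mulLeft φ e _
      _ = φ e * (c * φ a) := by rw [map_smul, map_smul, hρπ, smul_eq_mul]
      _ = φ a := by rw [← mul_assoc, hc, one_mul]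

end

/-- Let `A` be a complex Banach algebra, `φ` a character of `A`,
`e ∈ A` with `‖e‖ ≤ 1` and `φ e ≠ 0`.  If `A` is `φ`-biprojective in the algebraic
sense (a `ℂ`-linear `ρ : A → A ⊗ A` which is an `A`-bimodule map with
`φ ∘ π_A ∘ ρ = φ`), then `ρ̃ = φ(e)⁻¹ • ρ` witnesses that `A_e` is
`ψ = φ(e)•φ`-biprojective: it is an `A_e`-bimodule map for the `A_e`-actions and
`ψ ∘ π_e ∘ ρ̃ = ψ`, where `π_e (x ⊗ y) = x * e * y`. -/
theorem stmt7 {A : Type*} [NonUnitalNormedRing A] [NormedSpace ℂ A]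
    [IsScalarTower ℂ A A] [SMulCommClass ℂ A A] [CompleteSpace A]
    (φ : A →L[ℂ] ℂ) (hφ0 : φ ≠ 0) (hφ : ∀ a b : A, φ (a * b) = φ a * φ b)
    (e : A) (he : ‖e‖ ≤ 1) (he0 : φ e ≠ 0)
    (ρ : A →ₗ[ℂ] TensorProduct ℂ A A)
    (hρl : ∀ a b : A,
      ρ (a * b) = LinearMap.rTensor A (LinearMap.mulLeft ℂ a) (ρ b))
    (hρr : ∀ a b : A,
      ρ (a * b) = LinearMap.lTensor A (LinearMap.mulRight ℂ b) (ρ a))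
    (hρπ : ∀ a : A, φ (LinearMap.mul' ℂ A (ρ a)) = φ a) :
    (∀ a b : A, (φ e)⁻¹ • ρ (a * e * b) =
      LinearMap.rTensor A (LinearMap.mulLeft ℂ (a * e)) ((φ e)⁻¹ • ρ b)) ∧
    (∀ a b : A, (φ e)⁻¹ • ρ (a * e * b) =
      LinearMap.lTensor A (LinearMap.mulRight ℂ (e * b)) ((φ e)⁻¹ • ρ a)) ∧
    (∀ a : A, φ e * φ (LinearMap.mul' ℂ A
        (LinearMap.lTensor A (LinearMap.mulLeft ℂ e) ((φ e)⁻¹ • ρ a)))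
      = φ e * φ a) :=
  stmt7_general { φ with map_smul' := map_smul φ, map_zero' := map_zero φ, map_mul' := hφ }
    e (φ e)⁻¹ (mul_inv_cancel₀ he0) ρ hρl hρr hρπ
end

section
/- Let A and B be complex Banach algebras, e_A ∈ A and e_B ∈ B with ‖e_A‖ ≤ 1 and ‖e_B‖ ≤ 1, and let φ_A, φ_B be characters of A and B with φ_A(e_A) ≠ 0 and φ_B(e_B) ≠ 0. Suppose A is φ_A-biprojective and B is φ_B-biprojective in the algebraic sense (for A: there exists a ℂ-linear map ρ₀ : A → A⊗A with ρ₀(ab) = a·ρ₀(b), ρ₀(ab) = ρ₀(a)·b for all a, b ∈ A, and φ_A(π_A(ρ₀(a))) = φ_A(a) for all a ∈ A; similarly for B). Let C = A ⊗[ℂ] B be the tensor product algebra with product (a₁⊗b₁)(a₂⊗b₂) = (a₁a₂)⊗(b₁b₂), let E = e_A⊗e_B ∈ C, and let ψ : C → ℂ be the linear functional with ψ(a⊗b) = φ_A(e_A)φ_A(a)·φ_B(e_B)φ_B(b). Then there exists a ℂ-linear map ρ : C → C⊗C such that for all u, v ∈ C: ρ(u·E·v) = (u·E)·ρ(v) and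 ρ(u·E·v) = ρ(u)·(E·v) (with the bimodule actions c·(x⊗y) = (c·x)⊗y, (x⊗y)·c = x⊗(y·c) on C⊗C), and ψ(π_E(ρ(u))) = ψ(u) for all u ∈ C, where π_E : C⊗C → C is the linear map with π_E(x⊗y) = x·E·y; that is, C_E is ψ-biprojective in the algebraic sense. -/
open TensorProduct

/-! The exchange isomorphism `(A ⊗ A) ⊗ (B ⊗ B) ≃ (A ⊗ B) ⊗ (A ⊗ B)` carries the multiplications
of `A` and `B` to that of `A ⊗ B`, so it turns `ρ ⊗ σ` into a bimodule map witnessing that `A ⊗ B`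
is `(φ ⊗ χ)`-biprojective. Independently, a witness `ρ` for `C` also intertwines the actions of
`C_E`, and since `φ (x * E * y) = φ E * φ (x * y)` for multiplicative `φ`, only the normalisation
has to be corrected: `(φ E)⁻¹ • ρ` is a witness for `C_E`. -/

section Biprojective

variable {R A : Type*} [CommSemiring R] [NonUnitalNonAssocSemiring A] [Module R A]
  [SMulCommClass R A A] [IsScalarTower R A A]

/-- `φ`-biprojectivity of the algebra `A` in the algebraic sense: some `A`-bimodule map
`ρ : A → A ⊗ A` satisfies `φ ∘ π ∘ ρ = φ`. It is stated for an arbitrary linear functional `φ`. -/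
def IsBiprojective (φ : Module.Dual R A) : Prop :=
  ∃ ρ : A →ₗ[R] A ⊗[R] A,
    (∀ a b : A, ρ (a * b) = (LinearMap.mulLeft R a).rTensor A (ρ b)) ∧
    (∀ a b : A, ρ (a * b) = (LinearMap.mulRight R b).lTensor A (ρ a)) ∧
    ∀ a : A, φ (LinearMap.mul' R A (ρ a)) = φ a

/-- `ψ`-biprojectivity, in the algebraic sense, of the algebra `A_E`: the module `A` with the
product `(a, b) ↦ a * E * b`. This product is written out instead of being installed on a copy of
`A`; on `A ⊗ A` it is `π_E = π ∘ (id ⊗ (E * ·))`. -/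
def IsDeformedBiprojective (E : A) (ψ : Module.Dual R A) : Prop :=
  ∃ ρ : A →ₗ[R] A ⊗[R] A,
    (∀ u v : A, ρ (u * E * v) = (LinearMap.mulLeft R (u * E)).rTensor A (ρ v)) ∧
    (∀ u v : A, ρ (u * E * v) = (LinearMap.mulRight R (E * v)).lTensor A (ρ u)) ∧
    ∀ u : A, ψ (LinearMap.mul' R A ((LinearMap.mulLeft R E).lTensor A (ρ u))) = ψ u

theorem IsDeformedBiprojective.smul {E : A} {ψ : Module.Dual R A}
    (h : IsDeformedBiprojective E ψ) (c : R) : IsDeformedBiprojective E (c • ψ) := by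
  obtain ⟨ρ, map_left, map_right, map_mul'⟩ := h
  exact ⟨ρ, map_left, map_right, fun u => congrArg (c • ·) (map_mul' u)⟩

theorem apply_mul'_lTensor_mulLeft {φ : Module.Dual R A} (hφ : ∀ a b, φ (a * b) = φ a * φ b)
    (E : A) (t : A ⊗[R] A) :
    φ (LinearMap.mul' R A ((LinearMap.mulLeft R E).lTensor A t)) =
      φ E * φ (LinearMap.mul' R A t) := by
  induction t using TensorProduct.induction_on with
  | zero => simp only [map_zero, mul_zero]
  | tmul x y =>
    simp only [LinearMap.lTensor_tmul, LinearMap.mulLeft_apply, LinearMap.mul'_apply, hφ]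
    exact mul_left_comm _ _ _
  | add s t hs ht => simp only [map_add, mul_add, hs, ht]

end Biprojective

section Deformation

variable {R A : Type*} [CommSemiring R] [NonUnitalSemiring A] [Module R A]
  [SMulCommClass R A A] [IsScalarTower R A A]

theorem IsBiprojective.isDeformedBiprojective {φ : Module.Dual R A} (h : IsBiprojective φ)
    (hφ : ∀ a b, φ (a * b) = φ a * φ b) {E : A} (hE : IsUnit (φ E)) :
    IsDeformedBiprojective E φ := by
  obtain ⟨ρ, map_left, map_right, map_mul'⟩ := h
  obtain ⟨r, hr⟩ := hE.exists_left_inv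
  refine ⟨r • ρ, fun u v => ?_, fun u v => ?_, fun u => ?_⟩
  · simp only [LinearMap.smul_apply, map_smul, map_left (u * E) v]
  · simp only [LinearMap.smul_apply, map_smul, mul_assoc u E v, map_right u (E * v)]
  · calc φ (LinearMap.mul' R A ((LinearMap.mulLeft R E).lTensor A ((r • ρ) u)))
        = φ E * φ (LinearMap.mul' R A ((r • ρ) u)) := apply_mul'_lTensor_mulLeft hφ E _
      _ = r * φ E * φ (LinearMap.mul' R A (ρ u)) := by
          simp only [LinearMap.smul_apply, map_smul, smul_eq_mul]; ring
      _ = φ u := by rw [hr, one_mul, map_mul']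

end Deformation

section TensorComul

variable {R M N : Type*} [CommSemiring R] [AddCommMonoid M] [Module R M]
  [AddCommMonoid N] [Module R N]

/-- The map `M ⊗ N → (M ⊗ N) ⊗ (M ⊗ N)` obtained from `ρ ⊗ σ` by exchanging the two middle tensor
factors; if `ρ` and `σ` witness biprojectivity of two algebras, it is the witness for their tensor
product. No coalgebra law is imposed on `ρ` and `σ`. -/
noncomputable def tensorComul (ρ : M →ₗ[R] M ⊗[R] M) (σ : N →ₗ[R] N ⊗[R] N) :
    M ⊗[R] N →ₗ[R] (M ⊗[R] N) ⊗[R] (M ⊗[R] N) :=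
  tensorTensorTensorComm R M M N N ∘ₗ map ρ σ

theorem tensorComul_comp_map {ρ : M →ₗ[R] M ⊗[R] M} {σ : N →ₗ[R] N ⊗[R] N}
    {f f₁ f₂ : M →ₗ[R] M} {g g₁ g₂ : N →ₗ[R] N}
    (hρ : ρ ∘ₗ f = map f₁ f₂ ∘ₗ ρ) (hσ : σ ∘ₗ g = map g₁ g₂ ∘ₗ σ) :
    tensorComul ρ σ ∘ₗ map f g = map (map f₁ g₁) (map f₂ g₂) ∘ₗ tensorComul ρ σ := by
  rw [tensorComul, LinearMap.comp_assoc, ← map_comp, hρ, hσ, map_comp,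
    ← LinearMap.comp_assoc, tensorTensorTensorComm_comp_map, LinearMap.comp_assoc]

end TensorComul

section TensorProduct

variable {R A B : Type*} [CommSemiring R]
  [NonUnitalNonAssocSemiring A] [Module R A] [SMulCommClass R A A] [IsScalarTower R A A]
  [NonUnitalNonAssocSemiring B] [Module R B] [SMulCommClass R B B] [IsScalarTower R B B]

theorem dualDistrib_tmul_map_mul {φ : Module.Dual R A} {χ : Module.Dual R B}
    (hφ : ∀ a b, φ (a * b) = φ a * φ b) (hχ : ∀ a b, χ (a * b) = χ a * χ b) (u v : A ⊗[R] B) :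
    dualDistrib R A B (φ ⊗ₜ χ) (u * v) =
      dualDistrib R A B (φ ⊗ₜ χ) u * dualDistrib R A B (φ ⊗ₜ χ) v := by
  induction u using TensorProduct.induction_on with
  | zero => simp only [zero_mul, map_zero]
  | add x y hx hy => simp only [add_mul, map_add, hx, hy]
  | tmul a b =>
    induction v using TensorProduct.induction_on with
    | zero => simp only [mul_zero, map_zero]
    | add x y hx hy => simp only [mul_add, map_add, hx, hy]
    | tmul a' b' =>
      simp only [Algebra.TensorProduct.tmul_mul_tmul, dualDistrib_apply, hφ, hχ]
      exact mul_mul_mul_comm _ _ _ _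

variable {ρ : A →ₗ[R] A ⊗[R] A} {σ : B →ₗ[R] B ⊗[R] B}

theorem tensorComul_mul_eq_rTensor
    (hρ : ∀ a b, ρ (a * b) = (LinearMap.mulLeft R a).rTensor A (ρ b))
    (hσ : ∀ a b, σ (a * b) = (LinearMap.mulLeft R a).rTensor B (σ b)) (u v : A ⊗[R] B) :
    tensorComul ρ σ (u * v) =
      (LinearMap.mulLeft R u).rTensor (A ⊗[R] B) (tensorComul ρ σ v) := by
  induction u using TensorProduct.induction_on with
  | zero => simp
  | tmul a b =>
    have ρ_comp : ρ ∘ₗ LinearMap.mulLeft R a = map (LinearMap.mulLeft R a) .id ∘ₗ ρ :=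
      LinearMap.ext (hρ a)
    have σ_comp : σ ∘ₗ LinearMap.mulLeft R b = map (LinearMap.mulLeft R b) .id ∘ₗ σ :=
      LinearMap.ext (hσ b)
    have comul_comp := tensorComul_comp_map ρ_comp σ_comp
    rw [← LinearMap.mulLeft_tmul, map_id] at comul_comp
    exact LinearMap.congr_fun comul_comp v
  | add x y hx hy =>
    have mulLeft_add :
        LinearMap.mulLeft R (x + y) = LinearMap.mulLeft R x + LinearMap.mulLeft R y :=
      map_add (LinearMap.mul R (A ⊗[R] B)) x y
    rw [add_mul, map_add, hx, hy, mulLeft_add, LinearMap.rTensor_add, LinearMap.add_apply]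

theorem tensorComul_mul_eq_lTensor
    (hρ : ∀ a b, ρ (a * b) = (LinearMap.mulRight R b).lTensor A (ρ a))
    (hσ : ∀ a b, σ (a * b) = (LinearMap.mulRight R b).lTensor B (σ a)) (u v : A ⊗[R] B) :
    tensorComul ρ σ (u * v) =
      (LinearMap.mulRight R v).lTensor (A ⊗[R] B) (tensorComul ρ σ u) := by
  induction v using TensorProduct.induction_on with
  | zero => simp
  | tmul a b =>
    have ρ_comp : ρ ∘ₗ LinearMap.mulRight R a = map .id (LinearMap.mulRight R a) ∘ₗ ρ :=
      LinearMap.ext (hρ · a)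
    have σ_comp : σ ∘ₗ LinearMap.mulRight R b = map .id (LinearMap.mulRight R b) ∘ₗ σ :=
      LinearMap.ext (hσ · b)
    have comul_comp := tensorComul_comp_map ρ_comp σ_comp
    rw [← LinearMap.mulRight_tmul, map_id] at comul_comp
    exact LinearMap.congr_fun comul_comp u
  | add x y hx hy =>
    have mulRight_add :
        LinearMap.mulRight R (x + y) = LinearMap.mulRight R x + LinearMap.mulRight R y :=
      map_add (LinearMap.mul R (A ⊗[R] B)).flip x y
    rw [mul_add, map_add, hx, hy, mulRight_add, LinearMap.lTensor_add, LinearMap.add_apply]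

theorem mul'_comp_tensorComul :
    LinearMap.mul' R (A ⊗[R] B) ∘ₗ tensorComul ρ σ =
      map (LinearMap.mul' R A ∘ₗ ρ) (LinearMap.mul' R B ∘ₗ σ) := by
  rw [tensorComul, ← LinearMap.comp_assoc, Algebra.mul'_comp_tensorTensorTensorComm, map_comp]

theorem IsBiprojective.tensorProduct {φ : Module.Dual R A} {χ : Module.Dual R B}
    (hφ : IsBiprojective φ) (hχ : IsBiprojective χ) :
    IsBiprojective (dualDistrib R A B (φ ⊗ₜ χ)) := by
  obtain ⟨ρ, ρ_left, ρ_right, ρ_mul'⟩ := hφ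
  obtain ⟨σ, σ_left, σ_right, σ_mul'⟩ := hχ
  have comp_eq : dualDistrib R A B (φ ⊗ₜ χ) ∘ₗ LinearMap.mul' R (A ⊗[R] B) ∘ₗ tensorComul ρ σ =
      dualDistrib R A B (φ ⊗ₜ χ) := by
    rw [mul'_comp_tensorComul]
    ext a b
    simp [ρ_mul', σ_mul']
  exact ⟨tensorComul ρ σ, tensorComul_mul_eq_rTensor ρ_left σ_left,
    tensorComul_mul_eq_lTensor ρ_right σ_right, LinearMap.congr_fun comp_eq⟩

end TensorProduct

theorem stmt9_general {R A B : Type*} [CommSemiring R]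
    [NonUnitalSemiring A] [Module R A] [SMulCommClass R A A] [IsScalarTower R A A]
    [NonUnitalSemiring B] [Module R B] [SMulCommClass R B B] [IsScalarTower R B B]
    {eA : A} {eB : B} {φA : Module.Dual R A} {φB : Module.Dual R B}
    (hφA : ∀ a b : A, φA (a * b) = φA a * φA b) (hφB : ∀ a b : B, φB (a * b) = φB a * φB b)
    (heA : IsUnit (φA eA)) (heB : IsUnit (φB eB))
    (hA : IsBiprojective φA) (hB : IsBiprojective φB) :
    IsDeformedBiprojective (eA ⊗ₜ[R] eB)
      ((φA eA * φB eB) • dualDistrib R A B (φA ⊗ₜ[R] φB)) :=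
  have hE : IsUnit (dualDistrib R A B (φA ⊗ₜ[R] φB) (eA ⊗ₜ[R] eB)) := heA.mul heB
  ((hA.tensorProduct hB).isDeformedBiprojective (dualDistrib_tmul_map_mul hφA hφB) hE).smul _

/-- Let `A`, `B` be complex Banach algebras, `e_A ∈ A`, `e_B ∈ B`
with `‖e_A‖ ≤ 1`, `‖e_B‖ ≤ 1`, and characters `φ_A`, `φ_B` with `φ_A e_A ≠ 0`,
`φ_B e_B ≠ 0`.  If `A` is `φ_A`-biprojective and `B` is `φ_B`-biprojective in the
algebraic sense, then `C_E` is `ψ`-biprojective in the algebraic sense, where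
`C = A ⊗[ℂ] B` is the tensor product algebra, `E = e_A ⊗ e_B`, and
`ψ (a ⊗ b) = φ_A(e_A)φ_A(a) · φ_B(e_B)φ_B(b)`. -/
theorem stmt9 {A B : Type*}
    [NonUnitalNormedRing A] [NormedSpace ℂ A]
    [IsScalarTower ℂ A A] [SMulCommClass ℂ A A] [CompleteSpace A]
    [NonUnitalNormedRing B] [NormedSpace ℂ B]
    [IsScalarTower ℂ B B] [SMulCommClass ℂ B B] [CompleteSpace B]
    (eA : A) (eB : B) (heA : ‖eA‖ ≤ 1) (heB : ‖eB‖ ≤ 1)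
    (φA : A →L[ℂ] ℂ) (hφA0 : φA ≠ 0) (hφA : ∀ a b : A, φA (a * b) = φA a * φA b)
    (φB : B →L[ℂ] ℂ) (hφB0 : φB ≠ 0) (hφB : ∀ a b : B, φB (a * b) = φB a * φB b)
    (heA0 : φA eA ≠ 0) (heB0 : φB eB ≠ 0)
    (hA : ∃ ρ₀ : A →ₗ[ℂ] TensorProduct ℂ A A,
      (∀ a b : A, ρ₀ (a * b) = LinearMap.rTensor A (LinearMap.mulLeft ℂ a) (ρ₀ b)) ∧
      (∀ a b : A, ρ₀ (a * b) = LinearMap.lTensor A (LinearMap.mulRight ℂ b) (ρ₀ a)) ∧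
      (∀ a : A, φA (LinearMap.mul' ℂ A (ρ₀ a)) = φA a))
    (hB : ∃ ρ₁ : B →ₗ[ℂ] TensorProduct ℂ B B,
      (∀ a b : B, ρ₁ (a * b) = LinearMap.rTensor B (LinearMap.mulLeft ℂ a) (ρ₁ b)) ∧
      (∀ a b : B, ρ₁ (a * b) = LinearMap.lTensor B (LinearMap.mulRight ℂ b) (ρ₁ a)) ∧
      (∀ a : B, φB (LinearMap.mul' ℂ B (ρ₁ a)) = φB a)) :
    ∃ ρ : (TensorProduct ℂ A B) →ₗ[ℂ]
        TensorProduct ℂ (TensorProduct ℂ A B) (TensorProduct ℂ A B),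
      (∀ u v : TensorProduct ℂ A B,
        ρ (u * (eA ⊗ₜ[ℂ] eB) * v) =
          LinearMap.rTensor (TensorProduct ℂ A B)
            (LinearMap.mulLeft ℂ (u * (eA ⊗ₜ[ℂ] eB))) (ρ v)) ∧
      (∀ u v : TensorProduct ℂ A B,
        ρ (u * (eA ⊗ₜ[ℂ] eB) * v) =
          LinearMap.lTensor (TensorProduct ℂ A B)
            (LinearMap.mulRight ℂ ((eA ⊗ₜ[ℂ] eB) * v)) (ρ u)) ∧
      (∀ u : TensorProduct ℂ A B,
        ((φA eA * φB eB) •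
            ((TensorProduct.lid ℂ ℂ).toLinearMap ∘ₗ
              TensorProduct.map (φA : A →ₗ[ℂ] ℂ) (φB : B →ₗ[ℂ] ℂ)))
          ((LinearMap.mul' ℂ (TensorProduct ℂ A B))
            (LinearMap.lTensor (TensorProduct ℂ A B)
              (LinearMap.mulLeft ℂ (eA ⊗ₜ[ℂ] eB)) (ρ u))) =
        ((φA eA * φB eB) •
            ((TensorProduct.lid ℂ ℂ).toLinearMap ∘ₗ
              TensorProduct.map (φA : A →ₗ[ℂ] ℂ) (φB : B →ₗ[ℂ] ℂ))) u) := by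
  -- `dualDistrib ℂ A B (φA ⊗ₜ φB)` is definitionally `lid ∘ₗ map φA φB`.
  exact stmt9_general (φA := φA.toLinearMap) (φB := φB.toLinearMap) hφA hφB heA0.isUnit
    heB0.isUnit hA hB
end

section
/- Let A be the complex Banach algebra of 3×3 upper triangular complex matrices (ℓ¹ norm on the entries), and let e ∈ A be the matrix with e₁₁ = e₁₂ = e₂₂ = e₃₃ = 1/4 and all other entries 0 (so ‖e‖ ≤ 1 and e is invertible in A). Then A_e is not Johnson pseudo-contractible: since A is finite-dimensional (so that the bidual of the projective tensor product A ⊗_p A identifies canonically with A⊗A), this means there is no nontrivial filter on an index type together with a family (m_i) in A⊗A such that for every a ∈ A and every i, a ∗ m_i = m_i ∗ a (where a ∗ (x⊗y) = (a·e·x)⊗y and (x⊗y) ∗ a = x⊗(y·e·a), extended linearly), and π_e(m_i)·e·a − a → 0 along the filter for every a ∈ A, where π_e : A⊗A → A is the linear map with π_e(x⊗y) = x·e·y. -/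
open Filter Topology Matrix TensorProduct

set_option synthInstance.maxHeartbeats 1000000

/-- The element `e ∈ UT3` with `e₁₁ = e₁₂ = e₂₂ = e₃₃ = 1/4` and other entries `0`. -/
noncomputable def eQ : UT3 :=
  ⟨!![(1/4 : ℂ), 1/4, 0; 0, 1/4, 0; 0, 0, 1/4], by
    intro i j hij
    fin_cases i <;> fin_cases j <;> simp_all [Matrix.vecHead, Matrix.vecTail]⟩

/-- The map `π_e : A ⊗ A → A`, `x ⊗ y ↦ x * e * y`, for `A = UT3`, `e = eQ`. -/
noncomputable def πe : TensorProduct ℂ UT3 UT3 →ₗ[ℂ] UT3 :=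
  (LinearMap.mul' ℂ UT3) ∘ₗ
    LinearMap.lTensor (UT3 : Type _) (LinearMap.mulLeft ℂ eQ)

/-!
Let `χ` be a character of an algebra `A`, and let `u ∈ A` and a functional `ψ` satisfy `χ u = 0` and
`ψ (u * x) = χ x`. If `u ∗ m = m ∗ u` in `A_e ⊗ A_e`, apply `ψ ⊗ χ` to both sides: the left one
becomes `χ (π_e m)` because `ψ (u * e * x) * χ y = χ (x * e * y)`, and the right one vanishes
because `χ (y * e * u) = 0`. So `π_e (m_i) * e` stays in the kernel of `χ` and cannot tend to `1`.
For upper triangular matrices and `i < j`, take the matrix unit `u = E_ij`, the diagonal character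
`χ x = x_jj` and `ψ x = x_ij`.
-/

universe w

section Twisted

variable (R : Type*) {A : Type*} [CommRing R] [Ring A] [Algebra R A]

/-- The product map `π_e : A ⊗ A → A`, `x ⊗ y ↦ x * e * y`, of the algebra `A_e`. -/
def twistedMul (e : A) : A ⊗[R] A →ₗ[R] A :=
  LinearMap.mul' R A ∘ₗ LinearMap.lTensor A (LinearMap.mulLeft R e)

/-- The algebra `A_e` has an approximate diagonal, indexed by a nontrivial filter on a type in
universe `w`, of elements of the algebraic tensor product `A ⊗ A` that commute with `A_e`.
For finite-dimensional complex `A` this is Johnson pseudo-contractibility of `A_e`. -/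
def HasCentralApproxDiagonal [TopologicalSpace A] (e : A) : Prop :=
  ∃ (ι : Type w) (l : Filter ι), l.NeBot ∧ ∃ m : ι → A ⊗[R] A,
    (∀ (a : A) (i : ι),
      LinearMap.rTensor A (LinearMap.mulLeft R (a * e)) (m i) =
        LinearMap.lTensor A (LinearMap.mulRight R (e * a)) (m i)) ∧
    ∀ a : A, Tendsto (fun i => twistedMul R e (m i) * e * a - a) l (𝓝 0)

variable {R} {χ : A →ₐ[R] R} {ψ : A →ₗ[R] R} {u : A}

theorem mul'_map_rTensor_mulLeft_eq_character (hψ : ∀ x, ψ (u * x) = χ x) (e : A) (m : A ⊗[R] A) :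
    LinearMap.mul' R R
        (TensorProduct.map ψ χ.toLinearMap (LinearMap.rTensor A (LinearMap.mulLeft R (u * e)) m)) =
      χ (twistedMul R e m) := by
  induction m with
  | zero => simp only [map_zero]
  | add m₁ m₂ h₁ h₂ => simp only [map_add, h₁, h₂]
  | tmul x y => simp [twistedMul, mul_assoc, hψ, mul_left_comm]

theorem mul'_map_lTensor_mulRight_eq_zero (hu : χ u = 0) (e : A) (m : A ⊗[R] A) :
    LinearMap.mul' R R
        (TensorProduct.map ψ χ.toLinearMap (LinearMap.lTensor A (LinearMap.mulRight R (e * u)) m)) =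
      0 := by
  induction m with
  | zero => simp only [map_zero]
  | add m₁ m₂ h₁ h₂ => simp only [map_add, h₁, h₂, add_zero]
  | tmul x y => simp [hu]

theorem character_twistedMul_eq_zero (hψ : ∀ x, ψ (u * x) = χ x) (hu : χ u = 0) {e : A}
    {m : A ⊗[R] A}
    (hm : LinearMap.rTensor A (LinearMap.mulLeft R (u * e)) m =
      LinearMap.lTensor A (LinearMap.mulRight R (e * u)) m) :
    χ (twistedMul R e m) = 0 := by
  rw [← mul'_map_rTensor_mulLeft_eq_character hψ, hm, mul'_map_lTensor_mulRight_eq_zero hu]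

theorem not_hasCentralApproxDiagonal_of_character [TopologicalSpace R] [T1Space R] [Nontrivial R]
    [TopologicalSpace A] (hχ : Continuous χ) (hψ : ∀ x, ψ (u * x) = χ x) (hu : χ u = 0) (e : A) :
    ¬ HasCentralApproxDiagonal.{w} R e := by
  rintro ⟨ι, l, _, m, hcentral, hlim⟩
  have hχm (i : ι) : χ (twistedMul R e (m i) * e * 1 - 1) = -1 := by
    simp [character_twistedMul_eq_zero hψ hu (hcentral u i)]
  have htendsto : Tendsto (fun _ : ι => (-1 : R)) l (𝓝 0) := by
    simpa only [Function.comp_def, hχm, map_zero] using (hχ.tendsto 0).comp (hlim 1)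
  exact neg_ne_zero.mpr one_ne_zero (tendsto_const_nhds_iff.mp htendsto)

end Twisted

section UpperTriangular

variable {n R : Type*} [Fintype n] [LinearOrder n]

theorem mul_apply_self_of_isUpperTriangular [NonUnitalNonAssocSemiring R] {M N : Matrix n n R}
    (hM : M.IsUpperTriangular) (hN : N.IsUpperTriangular) (j : n) :
    (M * N) j j = M j j * N j j := by
  rw [Matrix.mul_apply]
  refine Finset.sum_eq_single_of_mem j (Finset.mem_univ j) fun k _ hkj => ?_
  rcases hkj.lt_or_gt with hlt | hgt
  · rw [hM hlt, zero_mul]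
  · rw [hN hgt, mul_zero]

variable [CommRing R]

variable (n R) in
/-- The algebra of upper triangular matrices with index set `n` over `R`; the algebra `UT3` is
definitionally the case `n = Fin 3`, `R = ℂ`. -/
abbrev upperTriangularSubalgebra : Subalgebra R (Matrix n n R) :=
  blockTriangularSubalgebra R R id

/-- The functional `M ↦ M i j` on upper triangular matrices. -/
def upperEntry (i j : n) : upperTriangularSubalgebra n R →ₗ[R] R :=
  entryLinearMap R R i j ∘ₗ (upperTriangularSubalgebra n R).val.toLinearMap

/-- The character `M ↦ M j j` of the algebra of upper triangular matrices. -/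
def diagCharacter (j : n) : upperTriangularSubalgebra n R →ₐ[R] R :=
  AlgHom.ofLinearMap (upperEntry j j) (Matrix.one_apply_eq j) fun M N =>
    mul_apply_self_of_isUpperTriangular M.2 N.2 j

theorem continuous_diagCharacter [TopologicalSpace R] (j : n) :
    Continuous (diagCharacter (R := R) j) :=
  continuous_subtype_val.matrix_elem j j

variable {i j : n}

variable (R) in
/-- The matrix unit `E_ij` as an element of the algebra of upper triangular matrices. -/
def upperMatrixUnit (hij : i ≤ j) : upperTriangularSubalgebra n R :=
  ⟨Matrix.single i j 1, blockTriangular_single hij 1⟩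

theorem upperEntry_upperMatrixUnit_mul (hij : i ≤ j) (M : upperTriangularSubalgebra n R) :
    upperEntry i j (upperMatrixUnit R hij * M) = diagCharacter j M :=
  (Matrix.single_mul_apply_same 1 i j j M.1).trans (one_mul _)

theorem diagCharacter_upperMatrixUnit (hij : i < j) :
    diagCharacter j (upperMatrixUnit R hij.le) = 0 :=
  Matrix.single_apply_of_row_ne hij.ne j j 1

theorem stmt13_general [Nontrivial n] [TopologicalSpace R] [T1Space R] [Nontrivial R]
    (e : upperTriangularSubalgebra n R) : ¬ HasCentralApproxDiagonal.{w} R e := by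
  obtain ⟨i, j, hij⟩ := exists_pair_lt n
  exact not_hasCentralApproxDiagonal_of_character (A := upperTriangularSubalgebra n R)
    (continuous_diagCharacter j) (upperEntry_upperMatrixUnit_mul hij.le)
    (diagCharacter_upperMatrixUnit hij) e

end UpperTriangular

/-- For `A` the 3×3 upper triangular complex matrices and `e`
the matrix with `e₁₁ = e₁₂ = e₂₂ = e₃₃ = 1/4`, `A_e` is not Johnson
pseudo-contractible.  Since `A` is finite dimensional, `(A ⊗_p A)**` identifies
with `A ⊗ A`, so this says: there is no nontrivial filter together with a family
`(m_i)` in `A ⊗ A` with `a ∗ m_i = m_i ∗ a` for all `a` and `i` (the `A_e`-module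
actions being `a ∗ (x ⊗ y) = (a*e*x) ⊗ y` and `(x ⊗ y) ∗ a = x ⊗ (y*e*a)`), and
`π_e(m_i)*e*a − a → 0` for every `a`, where `π_e (x ⊗ y) = x*e*y`. -/
theorem stmt13 :
    ¬ ∃ (ι : Type) (l : Filter ι), l.NeBot ∧ ∃ m : ι → TensorProduct ℂ UT3 UT3,
      (∀ (a : UT3) (i : ι),
        LinearMap.rTensor (UT3 : Type _) (LinearMap.mulLeft ℂ (a * eQ)) (m i) =
          LinearMap.lTensor (UT3 : Type _) (LinearMap.mulRight ℂ (eQ * a)) (m i)) ∧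
      (∀ a : UT3,
        Tendsto (fun i => πe (m i) * eQ * a - a) l (𝓝 0)) :=
  stmt13_general (n := Fin 3) eQ
end
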